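/- Fix n ≥ 0. Let Φ₈(n) be the (2n+2)×(2n+2) matrix over k[X,Y] obtained from Φ₄(n)⁺ by multiplying its last column (index 2n+1) by z₂, where Φ₄(n)⁺ is the lower-triangular matrix with rows and columns indexed 0,…,2n+1 whose only nonzero entries are: (0,0) = z₃; (1,0) = −z₄, (1,1) = z₁z₄; for 1 ≤ j ≤ n: (2j, 2j−1) = −z₁z₃, (2j, 2j) = z₂z₃, and (2j+1, 2j−1) = z₁z₄, (2j+1, 2j) = −z₂z₄, (2j+1, 2j+1) = z₁z₄. Then there exists a (2n+2)×(2n+2) matrix Ψ with entries in k[X,Y] such that Φ₈(n)·Ψ = Ψ·Φ₈(n) = F·I₂ₙ₊₂. -/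

import Mathlib

/-!
Up to diagonal scalings, `Φ₈(n)` is an invertible integer matrix: dividing the even rows by `z₃`,
the odd rows by `z₄`, and each column by a suitable divisor of `z₁z₂` leaves a lower unitriangular
matrix `U` with entries in `{0, 1, -1}`. Hence `Φ₈(n) = D U C` with `D`, `C` diagonal, where the
entries of `D` divide `z₃z₄` and those of `C` divide `z₁z₂`. Complementary diagonal matrices `D'`,
`C'` with `D D' = z₃z₄` and `C C' = z₁z₂` give `Ψ = C' U⁻¹ D'`.
-/

section MatrixFactor

variable {m R : Type*} [Fintype m] [DecidableEq m]

/-- `Φ` is part of a matrix factorization of the scalar `f`: some `Ψ` satisfies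
`Φ Ψ = Ψ Φ = f I`. -/
def IsMatrixFactor [CommSemiring R] (f : R) (Φ : Matrix m m R) : Prop :=
  ∃ Ψ : Matrix m m R, Φ * Ψ = f • (1 : Matrix m m R) ∧ Ψ * Φ = f • (1 : Matrix m m R)

lemma IsMatrixFactor.mul [CommSemiring R] {f g : R} {A B : Matrix m m R}
    (hA : IsMatrixFactor f A) (hB : IsMatrixFactor g B) : IsMatrixFactor (f * g) (A * B) := by
  obtain ⟨A', hAA', hA'A⟩ := hA
  obtain ⟨B', hBB', hB'B⟩ := hB
  refine ⟨B' * A', ?_, ?_⟩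
  · calc A * B * (B' * A') = A * (B * B') * A' := by simp only [Matrix.mul_assoc]
      _ = (f * g) • (1 : Matrix m m R) := by
        rw [hBB', Matrix.mul_smul, Matrix.mul_one, Matrix.smul_mul, hAA', smul_smul, mul_comm]
  · calc B' * A' * (A * B) = B' * (A' * A) * B := by simp only [Matrix.mul_assoc]
      _ = (f * g) • (1 : Matrix m m R) := by
        rw [hA'A, Matrix.mul_smul, Matrix.mul_one, Matrix.smul_mul, hB'B, smul_smul]

lemma isMatrixFactor_diagonal [CommSemiring R] {f : R} {d : m → R} (hd : ∀ i, d i ∣ f) :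
    IsMatrixFactor f (Matrix.diagonal d) := by
  choose d' hd' using hd
  refine ⟨Matrix.diagonal d', ?_, ?_⟩
  · simp only [Matrix.diagonal_mul_diagonal, ← hd', Matrix.smul_one_eq_diagonal]
  · simp only [Matrix.diagonal_mul_diagonal, mul_comm (d' _), ← hd', Matrix.smul_one_eq_diagonal]

lemma isMatrixFactor_one_of_isUnit [CommSemiring R] {U : Matrix m m R} (hU : IsUnit U) :
    IsMatrixFactor 1 U := by
  obtain ⟨V, hUV, hVU⟩ := isUnit_iff_exists.mp hU
  exact ⟨V, by rwa [one_smul], by rwa [one_smul]⟩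

end MatrixFactor

/-- The unitriangular matrix `U` left from `Φ₄(n)⁺` after removing its row and column scalings:
ones on the diagonal, `-1` just below it, and ones two below it in the odd rows. -/
def unitriangularCore (R : Type*) [Ring R] (N : ℕ) : Matrix (Fin N) (Fin N) R :=
  .of fun i j =>
    if j = i then 1
    else if j.val + 1 = i.val then -1
    else if j.val + 2 = i.val ∧ i.val % 2 = 1 then 1
    else 0

lemma isUnit_unitriangularCore (R : Type*) [CommRing R] (N : ℕ) :
    IsUnit (unitriangularCore R N) := by
  have hlower : (unitriangularCore R N).IsLowerTriangular := by
    intro i j hij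
    have hlt : i.val < j.val := hij
    simp only [unitriangularCore, Matrix.of_apply, Fin.ext_iff]
    split_ifs <;> first | rfl | omega
  have hdet : (unitriangularCore R N).det = 1 := by
    rw [Matrix.det_of_isLowerTriangular _ hlower]
    simp [unitriangularCore]
  simp [Matrix.isUnit_iff_isUnit_det, hdet]

section PhiMatrices

variable {R : Type*} [CommRing R] (z1 z2 z3 z4 : R)

/-- The matrix `Φ₄(n)⁺` for arbitrary ring elements `z₁, …, z₄`. The entries do not depend on the
size `N`, which is `2n + 2` in `Φ₄(n)⁺`. -/
def phiFourPlus (N : ℕ) : Matrix (Fin N) (Fin N) R :=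
  .of fun i j =>
    if i.val = 0 then (if j.val = 0 then z3 else 0)
    else if i.val = 1 then
      (if j.val = 0 then -z4 else if j.val = 1 then z1 * z4 else 0)
    else if i.val % 2 = 0 then
      (if j.val = i.val - 1 then -(z1 * z3)
       else if j.val = i.val then z2 * z3 else 0)
    else
      (if j.val = i.val - 2 then z1 * z4
       else if j.val = i.val - 1 then -(z2 * z4)
       else if j.val = i.val then z1 * z4 else 0)

/-- The matrix `Φ₈(n)`: the last column of `Φ₄(n)⁺` is multiplied by `z₂`. -/
def phiEight (n : ℕ) : Matrix (Fin (2 * n + 2)) (Fin (2 * n + 2)) R :=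
  .of fun i j => (if j.val = 2 * n + 1 then z2 else 1) * phiFourPlus z1 z2 z3 z4 (2 * n + 2) i j

/-- The common factor of row `i` of `Φ₄(n)⁺`. -/
def rowFactor (i : ℕ) : R := if i % 2 = 0 then z3 else z4

/-- The common factor of column `j` of `Φ₄(n)⁺` left after the row factors are removed. -/
def colFactor (j : ℕ) : R := if j = 0 then 1 else if j % 2 = 0 then z2 else z1

lemma phiFourPlus_apply_eq_rowFactor_mul_colFactor (N : ℕ) (i j : Fin N) :
    phiFourPlus z1 z2 z3 z4 N i j =
      rowFactor z3 z4 i * unitriangularCore R N i j * colFactor z1 z2 j := by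
  simp only [phiFourPlus, rowFactor, unitriangularCore, colFactor, Matrix.of_apply, Fin.ext_iff]
  split_ifs <;> first | omega | ring

lemma phiEight_eq_diagonal_mul_mul_diagonal (n : ℕ) :
    phiEight z1 z2 z3 z4 n =
      Matrix.diagonal (fun i : Fin (2 * n + 2) => rowFactor z3 z4 i) *
        unitriangularCore R (2 * n + 2) *
        Matrix.diagonal (fun j : Fin (2 * n + 2) =>
          colFactor z1 z2 j * if j.val = 2 * n + 1 then z2 else 1) := by
  ext i j
  rw [Matrix.mul_diagonal, Matrix.diagonal_mul, phiEight, Matrix.of_apply,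
    phiFourPlus_apply_eq_rowFactor_mul_colFactor]
  ring

lemma rowFactor_dvd (i : ℕ) : rowFactor z3 z4 i ∣ z3 * z4 := by
  unfold rowFactor
  split_ifs
  exacts [dvd_mul_right z3 z4, dvd_mul_left z4 z3]

lemma colFactor_mul_ite_dvd (n j : ℕ) :
    (colFactor z1 z2 j * if j = 2 * n + 1 then z2 else 1) ∣ z1 * z2 := by
  split_ifs with hlast
  · have hcol : colFactor z1 z2 j = z1 := by
      rw [colFactor, if_neg (by omega), if_neg (by omega)]
    rw [hcol]
  · rw [mul_one, colFactor]
    split_ifs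
    exacts [one_dvd _, dvd_mul_left z2 z1, dvd_mul_right z1 z2]

theorem stmt_18_general (n : ℕ) :
    IsMatrixFactor (z1 * z2 * z3 * z4) (phiEight z1 z2 z3 z4 n) := by
  have hrow := isMatrixFactor_diagonal fun i : Fin (2 * n + 2) => rowFactor_dvd z3 z4 i
  have hcore := isMatrixFactor_one_of_isUnit (isUnit_unitriangularCore R (2 * n + 2))
  have hcol := isMatrixFactor_diagonal fun j : Fin (2 * n + 2) =>
    colFactor_mul_ite_dvd z1 z2 n j
  rw [phiEight_eq_diagonal_mul_mul_diagonal,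
    show z1 * z2 * z3 * z4 = z3 * z4 * 1 * (z1 * z2) by ring]
  exact (hrow.mul hcore).mul hcol

end PhiMatrices

/-- For `n ≥ 0`, the matrix `Φ₈(n)`, obtained from `Φ₄(n)⁺` by multiplying the
last column by `z₂`, is part of a matrix factorization of `F`. -/
theorem stmt_18 {k : Type*} [Field k] (lam : k) (h0 : lam ≠ 0) (h1 : lam ≠ 1)
    (z1 z2 z3 z4 F : MvPolynomial (Fin 2) k)
    (hz1 : z1 = MvPolynomial.X 1) (hz2 : z2 = MvPolynomial.X 0)
    (hz3 : z3 = MvPolynomial.X 0 - MvPolynomial.X 1)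
    (hz4 : z4 = MvPolynomial.X 0 - MvPolynomial.C lam * MvPolynomial.X 1)
    (hF : F = z1 * z2 * z3 * z4)
    (n : ℕ)
    (Φ₄ Φ₈ : Matrix (Fin (2 * n + 2)) (Fin (2 * n + 2)) (MvPolynomial (Fin 2) k))
    (hΦ₄ : ∀ i j : Fin (2 * n + 2), Φ₄ i j =
      if i.val = 0 then (if j.val = 0 then z3 else 0)
      else if i.val = 1 then
        (if j.val = 0 then -z4 else if j.val = 1 then z1 * z4 else 0)
      else if i.val % 2 = 0 then
        (if j.val = i.val - 1 then -(z1 * z3)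
         else if j.val = i.val then z2 * z3 else 0)
      else
        (if j.val = i.val - 2 then z1 * z4
         else if j.val = i.val - 1 then -(z2 * z4)
         else if j.val = i.val then z1 * z4 else 0))
    (hΦ₈ : ∀ i j : Fin (2 * n + 2), Φ₈ i j =
      (if j.val = 2 * n + 1 then z2 else 1) * Φ₄ i j) :
    ∃ Ψ : Matrix (Fin (2 * n + 2)) (Fin (2 * n + 2)) (MvPolynomial (Fin 2) k),
      Φ₈ * Ψ = F • (1 : Matrix (Fin (2 * n + 2)) (Fin (2 * n + 2)) (MvPolynomial (Fin 2) k)) ∧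
      Ψ * Φ₈ = F • (1 : Matrix (Fin (2 * n + 2)) (Fin (2 * n + 2)) (MvPolynomial (Fin 2) k)) := by
  obtain rfl : Φ₄ = phiFourPlus z1 z2 z3 z4 (2 * n + 2) := Matrix.ext hΦ₄
  obtain rfl : Φ₈ = phiEight z1 z2 z3 z4 n := Matrix.ext hΦ₈
  exact hF ▸ stmt_18_general z1 z2 z3 z4 n
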